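/- Let R be a regular local ring of Krull dimension 2, and let G be a nonzero finitely generated R-module that is torsion (i.e., G ⊗_R Frac(R) = 0) and has no nonzero submodule of finite length. Then there exist a natural number a and an injective R-linear map f : R^a → R^a whose cokernel is isomorphic to G; in particular G admits a free resolution 0 → R^a → R^a → G → 0 by free modules of the same finite rank. -/

import Mathlib

/-- A (commutative, local) ring is a *regular local ring of Krull dimension 2* if it is
Noetherian, has Krull dimension 2, and its maximal ideal is generated by 2 elements. -/
def IsRegularLocalRingOfDimTwo (R : Type*) [CommRing R] [IsLocalRing R] : Prop :=
  IsNoetherianRing R ∧ ringKrullDim R = 2 ∧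
    ∃ x y : R, IsLocalRing.maximalIdeal R = Ideal.span {x, y}

/-!
Since `G` has no nonzero submodule of finite length, the maximal ideal `m` is not an associated
prime of `G`, so by prime avoidance some `x ∈ m \ m²` is a nonzerodivisor on `G`. As `x ∉ m²`, the
ring `R/x` is regular of dimension one, i.e. a discrete valuation ring.

Let `K` be the kernel of a surjection `R^a → G`. The kernel of `K/xK → (R/x)^a` is
`Tor₁(G, R/x) = G[x] = 0`, so `K/xK` is torsion free, hence free, over `R/x`, and `K` is free over
`R` by Nakayama. Comparing ranks over the domain `R`, where `G` is torsion, gives `K ≃ R^a`.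

That a regular local ring is a domain follows by induction on the dimension: choosing
`x ∈ m \ m²` outside the minimal primes, `(x)` is prime because `R/x` is a regular local ring of
smaller dimension, and a minimal prime `q ⊆ (x)` satisfies `q = xq`, so `q = 0`.
-/

open IsLocalRing

section VectorSpace

theorem exists_span_insert_eq_top_ncard_add_one_eq_finrank {k V : Type*} [DivisionRing k]
    [AddCommGroup V] [Module k V] [FiniteDimensional k V] {v : V} (hv : v ≠ 0) :
    ∃ s : Set V, s.Finite ∧ s.ncard + 1 = Module.finrank k V ∧
      Submodule.span k (insert v s) = ⊤ := by
  have hli : LinearIndepOn k id {v} := LinearIndepOn.singleton hv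
  let B : Set V := hli.extend (Set.subset_univ _)
  let b : Module.Basis B k V := Module.Basis.extend hli
  have hvB : v ∈ B := hli.subset_extend (Set.subset_univ _) (Set.mem_singleton v)
  have hBfin : B.Finite := Module.Finite.finite_basis b
  refine ⟨B \ {v}, hBfin.sdiff, ?_, ?_⟩
  · rw [Set.ncard_sdiff_singleton_add_one hvB hBfin, Module.finrank_eq_nat_card_basis b]
    rfl
  · rw [Set.insert_sdiff_singleton, Set.insert_eq_of_mem hvB]
    rw [← b.span_eq, Module.Basis.range_extend]

end VectorSpace

section LocalRing

variable {R : Type*} [CommRing R] [IsLocalRing R]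

theorem isLocalRing_quotient_span_singleton {x : R} (hx : x ∈ maximalIdeal R) :
    IsLocalRing (R ⧸ Ideal.span {x}) := by
  have : Nontrivial (R ⧸ Ideal.span {x}) :=
    Ideal.Quotient.nontrivial_iff.2 (by rwa [Ne, Ideal.span_singleton_eq_top])
  exact .of_surjective' _ Ideal.Quotient.mk_surjective

variable [IsNoetherianRing R]

theorem exists_maximalIdeal_eq_span_insert {x : R} (hx : x ∈ maximalIdeal R)
    (hx2 : x ∉ maximalIdeal R ^ 2) :
    ∃ s : Set R, s.Finite ∧ s.ncard + 1 ≤ (maximalIdeal R).spanFinrank ∧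
      maximalIdeal R = Ideal.span (insert x s) := by
  have hxbar : (maximalIdeal R).toCotangent ⟨x, hx⟩ ≠ 0 := by
    rwa [Ne, Ideal.toCotangent_eq_zero]
  obtain ⟨t, ht_fin, ht_card, ht_span⟩ :=
    exists_span_insert_eq_top_ncard_add_one_eq_finrank (k := ResidueField R) hxbar
  let lift : CotangentSpace R → maximalIdeal R :=
    Function.surjInv (maximalIdeal R).toCotangent_surjective
  have hlift : (maximalIdeal R).toCotangent '' (lift '' t) = t := by
    rw [Set.image_image]
    simp [lift, Function.surjInv_eq]
  refine ⟨Subtype.val '' (lift '' t), (ht_fin.image _).image _, ?_, ?_⟩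
  · rw [spanFinrank_maximalIdeal_eq_finrank_cotangentSpace, ← ht_card]
    gcongr
    exact (Set.ncard_image_le (ht_fin.image _)).trans (Set.ncard_image_le ht_fin)
  · rw [← hlift, ← Set.image_insert_eq, CotangentSpace.span_image_eq_top_iff] at ht_span
    calc
      maximalIdeal R = (⊤ : Submodule R (maximalIdeal R)).map (maximalIdeal R).subtype := by simp
      _ = Ideal.span (insert x (Subtype.val '' (lift '' t))) := by
        rw [← ht_span, Submodule.map_span, Set.image_insert_eq]
        rfl

theorem spanFinrank_maximalIdeal_quotient_add_one_le {x : R} (hx : x ∈ maximalIdeal R)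
    (hx2 : x ∉ maximalIdeal R ^ 2) [IsLocalRing (R ⧸ Ideal.span {x})] :
    (maximalIdeal (R ⧸ Ideal.span {x})).spanFinrank + 1 ≤ (maximalIdeal R).spanFinrank := by
  obtain ⟨s, hs_fin, hs_card, hs_span⟩ := exists_maximalIdeal_eq_span_insert hx hx2
  have hmax : maximalIdeal (R ⧸ Ideal.span {x}) =
      Ideal.span (Ideal.Quotient.mk (Ideal.span {x}) '' s) := by
    rw [← map_maximalIdeal_of_surjective _ Ideal.Quotient.mk_surjective, hs_span, Ideal.map_span,
      Set.image_insert_eq, Ideal.Quotient.mk_singleton_self, Ideal.span_insert_zero]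
  rw [hmax]
  refine le_trans ?_ hs_card
  gcongr
  exact (Submodule.spanFinrank_span_le_ncard_of_finite (hs_fin.image _)).trans
    (Set.ncard_image_le hs_fin)

theorem exists_mem_maximalIdeal_notMem_sq (hR : ¬ IsField R) {S : Set (Ideal R)} (hS : S.Finite)
    (hprime : ∀ p ∈ S, p.IsPrime) (hmS : maximalIdeal R ∉ S) :
    ∃ x ∈ maximalIdeal R, x ∉ maximalIdeal R ^ 2 ∧ ∀ p ∈ S, x ∉ p := by
  have hm_sq : maximalIdeal R ≠ maximalIdeal R ^ 2 := fun h ↦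
    hR <| subsingleton_cotangentSpace_iff.1 <| (Ideal.cotangent_subsingleton_iff _).2 <|
      ((pow_two _).symm.trans h.symm :)
  have hsq_top : maximalIdeal R ^ 2 ≠ ⊤ :=
    ((Ideal.pow_le_self two_ne_zero).trans_lt (maximalIdeal.isMaximal R).ne_top.lt_top).ne
  have hcover := (Ideal.subset_iUnion_iff_mem_of_isMaximal_of_finite (M := maximalIdeal R)
    (hS.insert (maximalIdeal R ^ 2)) (maximalIdeal R ^ 2) (maximalIdeal R ^ 2)
    (fun p hp hne _ ↦ hprime p (hp.resolve_left hne)) hsq_top hsq_top).not.2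
    (by simp [hm_sq, hmS])
  simpa [Set.not_subset] using hcover

theorem isDomain_of_isPrime_span_singleton {x : R} (hx : (Ideal.span {x}).IsPrime)
    (hx_min : ∀ q ∈ minimalPrimes R, x ∉ q) : IsDomain R := by
  obtain ⟨q, hq, hq_le⟩ := Ideal.exists_minimalPrimes_le (bot_le : ⊥ ≤ Ideal.span {x})
  have hq_prime : q.IsPrime := hq.1.1
  have hq_smul : q ≤ Ideal.span {x} • q := by
    intro r hr
    obtain ⟨s, rfl⟩ := Ideal.mem_span_singleton.1 (hq_le hr)
    have hs : s ∈ q := (hq_prime.mem_or_mem hr).resolve_left (hx_min q hq)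
    exact Submodule.smul_mem_smul (Ideal.mem_span_singleton_self x) hs
  have hq_bot : q = ⊥ := Submodule.eq_bot_of_le_smul_of_le_jacobson_bot _ q
    (IsNoetherian.noetherian q) hq_smul
    (jacobson_eq_maximalIdeal (⊥ : Ideal R) bot_ne_top ▸ le_maximalIdeal hx.ne_top)
  exact @IsDomain.of_bot_isPrime R _ (hq_bot ▸ hq_prime)

theorem exists_isSMulRegular_notMem_sq (hR : ¬ IsField R) (M : Type*) [AddCommGroup M] [Module R M]
    [Module.Finite R M] (hM : maximalIdeal R ∉ associatedPrimes R M) :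
    ∃ x ∈ maximalIdeal R, x ∉ maximalIdeal R ^ 2 ∧ IsSMulRegular M x := by
  obtain ⟨x, hx, hx2, hx_ass⟩ := exists_mem_maximalIdeal_notMem_sq hR
    (associatedPrimes.finite R M) (fun _ hp ↦ hp.isPrime) hM
  refine ⟨x, hx, hx2, ?_⟩
  have hx_compl : x ∉ ⋃ p ∈ associatedPrimes R M, (p : Set R) := by simpa using hx_ass
  rwa [biUnion_associatedPrimes_eq_compl_regular, Set.notMem_compl_iff] at hx_compl

end LocalRing

section RegularLocalRing

variable {R : Type*} [CommRing R] [IsRegularLocalRing R]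

theorem maximalIdeal_notMem_minimalPrimes_of_not_isField (hR : ¬ IsField R) :
    maximalIdeal R ∉ minimalPrimes R := by
  intro hmin
  have hdim : ringKrullDim R = 0 := by
    rw [← maximalIdeal_height_eq_ringKrullDim, Ideal.height_eq_zero_iff.2 hmin]
    rfl
  have hrank : (maximalIdeal R).spanFinrank = 0 := by
    exact_mod_cast IsRegularLocalRing.spanFinrank_maximalIdeal.trans hdim
  rw [Submodule.spanFinrank_eq_zero_iff_eq_bot (maximalIdeal R).fg_of_isNoetherianRing] at hrank
  exact hR (isField_iff_maximalIdeal_eq.2 hrank)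

theorem isRegularLocalRing_quotient_span_singleton {x : R} (hx : x ∈ maximalIdeal R)
    (hx2 : x ∉ maximalIdeal R ^ 2) : IsRegularLocalRing (R ⧸ Ideal.span {x}) := by
  have := isLocalRing_quotient_span_singleton hx
  refine .of_spanFinrank_maximalIdeal_le _ (ENat.WithBot.add_le_add_one_right_iff.1 ?_)
  calc ((maximalIdeal (R ⧸ Ideal.span {x})).spanFinrank : WithBot ℕ∞) + 1
    _ ≤ (maximalIdeal R).spanFinrank := by
      exact_mod_cast spanFinrank_maximalIdeal_quotient_add_one_le hx hx2
    _ = (maximalIdeal R).height := by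
      rw [IsRegularLocalRing.spanFinrank_maximalIdeal, maximalIdeal_height_eq_ringKrullDim]
    _ ≤ ringKrullDim (R ⧸ Ideal.span {x}) + 1 := Ideal.height_le_ringKrullDim_quotient_add_one hx

theorem isDomain_of_isRegularLocalRing (R : Type*) [CommRing R] [IsRegularLocalRing R] :
    IsDomain R := by
  induction hn : (maximalIdeal R).spanFinrank using Nat.strong_induction_on generalizing R with
  | h n ih =>
    by_cases hR : IsField R
    · exact hR.isDomain
    obtain ⟨x, hx, hx2, hx_min⟩ := exists_mem_maximalIdeal_notMem_sq hR
      (minimalPrimes.finite_of_isNoetherianRing R) (fun _ hp ↦ hp.1.1)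
      (maximalIdeal_notMem_minimalPrimes_of_not_isField hR)
    have := isRegularLocalRing_quotient_span_singleton hx hx2
    have hrank : (maximalIdeal (R ⧸ Ideal.span {x})).spanFinrank < n :=
      hn ▸ spanFinrank_maximalIdeal_quotient_add_one_le hx hx2
    have hquot : IsDomain (R ⧸ Ideal.span {x}) := ih _ hrank _ rfl
    exact isDomain_of_isPrime_span_singleton ((Ideal.Quotient.isDomain_iff_prime _).1 hquot) hx_min

theorem isPrincipalIdealRing_of_isRegularLocalRing_of_ringKrullDim_le_one (h : ringKrullDim R ≤ 1) :
    IsPrincipalIdealRing R := by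
  have := isDomain_of_isRegularLocalRing R
  have hprinc : (maximalIdeal R).IsPrincipal := by
    rw [← finrank_cotangentSpace_le_one_iff, ← spanFinrank_maximalIdeal_eq_finrank_cotangentSpace]
    rw [← IsRegularLocalRing.spanFinrank_maximalIdeal] at h
    exact_mod_cast h
  exact ((tfae_of_isNoetherianRing_of_isLocalRing_of_isDomain R).out 0 4).2 hprinc

end RegularLocalRing

section Module

variable {R M : Type*} [CommRing R] [AddCommGroup M] [Module R M]

theorem exists_isSimpleModule_of_isMaximal_of_mem_associatedPrimes [IsNoetherianRing R]
    {p : Ideal R} [hmax : p.IsMaximal] (hp : p ∈ associatedPrimes R M) :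
    ∃ N : Submodule R M, IsSimpleModule R N := by
  obtain ⟨-, f, hf⟩ := (isAssociatedPrime_iff_exists_injective_linearMap ..).1 hp
  exact ⟨LinearMap.range f, isSimpleModule_iff_quot_maximal.2
    ⟨p, hmax, ⟨(LinearEquiv.ofInjective f hf).symm⟩⟩⟩

theorem quotSMulTop_map_subtype_injective {N : Submodule R M} {x : R}
    (hx : IsSMulRegular (M ⧸ N) x) : Function.Injective (QuotSMulTop.map x N.subtype) := by
  have hzero : Function.Exact (0 : N →ₗ[R] N) N.subtype :=
    (LinearMap.exact_zero_iff_injective _ _).2 N.injective_subtype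
  have hexact := QuotSMulTop.map_first_exact_on_four_term_exact_of_isSMulRegular_last hzero
    (LinearMap.exact_subtype_mkQ N) hx
  rwa [map_zero, LinearMap.exact_zero_iff_injective] at hexact

theorem free_submodule_of_isSMulRegular_quotient [IsNoetherianRing R]
    [Module.Free R M] [Module.Finite R M] {x : R} (hx_jac : x ∈ (⊥ : Ideal R).jacobson)
    (hx : IsSMulRegular M x) [IsDomain (R ⧸ Ideal.span {x})]
    [IsPrincipalIdealRing (R ⧸ Ideal.span {x})] {N : Submodule R M}
    (hxN : IsSMulRegular (M ⧸ N) x) : Module.Free R N := by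
  have : Module.FinitePresentation R N := Module.finitePresentation_of_finite R N
  rw [← Module.free_quotSMulTop_iff_free R N hx_jac (hx.submodule N x)]
  let ι : QuotSMulTop x N →ₗ[R ⧸ Ideal.span {x}] QuotSMulTop x M :=
    (QuotSMulTop.map x N.subtype).extendScalarsOfSurjective Ideal.Quotient.mk_surjective
  have hι : Function.Injective ι := quotSMulTop_map_subtype_injective hxN
  have := Module.Finite.of_restrictScalars_finite R (R ⧸ Ideal.span {x}) (QuotSMulTop x N)
  have : Module.IsTorsionFree (R ⧸ Ideal.span {x}) (QuotSMulTop x N) :=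
    hι.moduleIsTorsionFree ι (by simp)
  infer_instance

end Module

section SquareResolution

variable {R G : Type*} [CommRing R] [AddCommGroup G] [Module R G]

theorem exists_injective_quotient_range_equiv_of_free_ker [IsDomain R]
    (hG : Module.IsTorsion R G) {n : ℕ} {p : (Fin n → R) →ₗ[R] G} (hp : Function.Surjective p)
    [Module.Finite R (LinearMap.ker p)] [Module.Free R (LinearMap.ker p)] :
    ∃ f : (Fin n → R) →ₗ[R] (Fin n → R), Function.Injective f ∧
      Nonempty (((Fin n → R) ⧸ LinearMap.range f) ≃ₗ[R] G) := by
  let K := LinearMap.ker p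
  let e : ((Fin n → R) ⧸ K) ≃ₗ[R] G := p.quotKerEquivOfSurjective hp
  have hrank : Module.finrank R K = n := by
    have h := Submodule.finrank_quotient_add_finrank K
    rwa [e.finrank_eq, hG.finrank_eq_zero, zero_add, Module.finrank_fin_fun] at h
  let b : (Fin n → R) ≃ₗ[R] K := (Module.finBasisOfFinrankEq R K hrank).equivFun.symm
  have hrange : LinearMap.range (K.subtype ∘ₗ b.toLinearMap) = K := by
    rw [LinearEquiv.range_comp, Submodule.range_subtype]
  exact ⟨K.subtype ∘ₗ b.toLinearMap, K.injective_subtype.comp b.injective,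
    ⟨(Submodule.quotEquivOfEq _ _ hrange).trans e⟩⟩

theorem free_ker_of_ringKrullDim_le_two [IsRegularLocalRing R] (hR : ringKrullDim R ≤ 2)
    (hG : maximalIdeal R ∉ associatedPrimes R G) {F : Type*} [AddCommGroup F] [Module R F]
    [Module.Free R F] [Module.Finite R F] {p : F →ₗ[R] G} (hp : Function.Surjective p) :
    Module.Free R (LinearMap.ker p) := by
  by_cases hfield : IsField R
  · let := hfield.toField
    infer_instance
  have := isDomain_of_isRegularLocalRing R
  have := Module.Finite.of_surjective p hp
  obtain ⟨x, hx, hx2, hxG⟩ := exists_isSMulRegular_notMem_sq hfield G hG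
  have hx0 : x ≠ 0 := fun h ↦ hx2 (h ▸ zero_mem _)
  have := isRegularLocalRing_quotient_span_singleton hx hx2
  have := isDomain_of_isRegularLocalRing (R ⧸ Ideal.span {x})
  have hdim : ringKrullDim (R ⧸ Ideal.span {x}) ≤ 1 := by
    rwa [← ENat.WithBot.add_le_add_one_right_iff, one_add_one_eq_two,
      ringKrullDim_quotient_span_singleton_succ_eq_ringKrullDim (smul_right_injective R hx0) hx]
  have := isPrincipalIdealRing_of_isRegularLocalRing_of_ringKrullDim_le_one hdim
  exact free_submodule_of_isSMulRegular_quotient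
    (by rwa [jacobson_eq_maximalIdeal _ bot_ne_top]) (smul_right_injective F hx0)
    (((p.quotKerEquivOfSurjective hp).isSMulRegular_congr x).2 hxG)

end SquareResolution

theorem IsRegularLocalRingOfDimTwo.isRegularLocalRing {R : Type*} [CommRing R] [IsLocalRing R]
    (hR : IsRegularLocalRingOfDimTwo R) : IsRegularLocalRing R := by
  obtain ⟨_, hdim, x, y, hxy⟩ := hR
  refine .of_spanFinrank_maximalIdeal_le R ?_
  rw [hdim, hxy]
  exact_mod_cast (Submodule.spanFinrank_span_le_ncard_of_finite (Set.toFinite {x, y})).trans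
    ((Set.ncard_insert_le x {y}).trans_eq (by rw [Set.ncard_singleton]))

/-- **Square free resolution.**  Over a regular local ring `R` of Krull dimension `2`,
a nonzero finitely generated torsion `R`-module `G` with no nonzero finite-length submodule
admits a free resolution `0 → R^a → R^a → G → 0` by free modules of equal finite rank. -/
theorem square_free_resolution {R : Type u} {G : Type v} [CommRing R] [IsLocalRing R]
    (hreg : IsRegularLocalRingOfDimTwo R)
    [AddCommGroup G] [Module R G] [Module.Finite R G] [Nontrivial G]
    (htors : Module.IsTorsion R G)
    (hpure : ∀ N : Submodule R G, IsFiniteLength R ↥N → N = ⊥) :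
    ∃ (a : ℕ) (f : (Fin a → R) →ₗ[R] (Fin a → R)),
      Function.Injective f ∧
        Nonempty (((Fin a → R) ⧸ LinearMap.range f) ≃ₗ[R] G) := by
  have := hreg.isRegularLocalRing
  have := isDomain_of_isRegularLocalRing R
  have hass : maximalIdeal R ∉ associatedPrimes R G := by
    intro hm
    obtain ⟨N, hN⟩ := exists_isSimpleModule_of_isMaximal_of_mem_associatedPrimes hm
    have hNbot : N = ⊥ :=
      hpure N (isFiniteLength_iff_isNoetherian_isArtinian.2 ⟨inferInstance, inferInstance⟩)
    exact Submodule.nontrivial_iff_ne_bot.1 hN.nontrivial hNbot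
  obtain ⟨a, p, hp⟩ := Module.Finite.exists_fin' R G
  have := free_ker_of_ringKrullDim_le_two hreg.2.1.le hass hp
  exact ⟨a, exists_injective_quotient_range_equiv_of_free_ker htors hp⟩
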